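/- arXiv:2310.02243 — 2 statements merged into one kernel-verified Lean document; each statement's English description precedes it below -/
import Mathlib

section
/- Let X, Y, A be n×n complex matrices and let S, S' ∈ {0,1}^ℓ be two sequences with the same number of 0's and the same number of 1's. Then there exist a natural number t ≤ ℓ^2, coefficients c_1, …, c_t ∈ {−1, 1}, and sequences S_1, T_1, …, S_t, T_t ∈ {0,1}^* with len(S_i) + len(T_i) = ℓ − 2 for each i, such that [(X,Y)_S, A] − [(X,Y)_{S'}, A] = ∑_{i=1}^{t} c_i · [(X,Y)_{S_i}, [[X,Y], [(X,Y)_{T_i}, A]]]. -/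
open scoped BigOperators Matrix

/-- The commutator `[M, N] = MN - NM`. -/
noncomputable def matComm {n : ℕ} (M N : Matrix (Fin n) (Fin n) ℂ) : Matrix (Fin n) (Fin n) ℂ :=
  M * N - N * M

/-- The bivariate nested commutator `[(X,Y)_S, A]`: for `S = (s₁, …, s_ℓ) ∈ {0,1}^ℓ`
(encoded as a list of booleans, `false` for `0` and `true` for `1`),
`[(X,Y)_S, A] = [Z₁, [Z₂, [⋯ [Z_ℓ, A] ⋯]]]` where `Zᵢ = X` if `sᵢ = 0` and `Zᵢ = Y`
otherwise. -/
noncomputable def commSeq {n : ℕ} (X Y : Matrix (Fin n) (Fin n) ℂ) :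
    List Bool → Matrix (Fin n) (Fin n) ℂ → Matrix (Fin n) (Fin n) ℂ
  | [], A => A
  | b :: S, A => matComm (if b then Y else X) (commSeq X Y S A)

/-!
Exchanging two adjacent entries of a nested bracket changes it, by the Leibniz identity
`⁅x, ⁅y, m⁆⁆ - ⁅y, ⁅x, m⁆⁆ = ⁅⁅x, y⁆, m⁆`, by one nested bracket with an inner commutator, and not
at all if the entries are equal. Adjacent exchanges, at most `ℓ.choose 2` of them, turn `S` into
`S'`, and the differences telescope.
-/

/-- `m` is a sum of at most `k` elements of `s`, repetitions allowed. Used to count error terms;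
the summands form a list so that concatenation gives additivity. -/
def IsSumOfAtMost {M : Type*} [AddMonoid M] (k : ℕ) (s : Set M) (m : M) : Prop :=
  ∃ l : List M, l.length ≤ k ∧ (∀ x ∈ l, x ∈ s) ∧ l.sum = m

namespace IsSumOfAtMost

section AddMonoid

variable {M N : Type*} [AddMonoid M] [AddMonoid N] {s : Set M} {k k' : ℕ} {m m' : M}

theorem zero (k : ℕ) (s : Set M) : IsSumOfAtMost k s 0 :=
  ⟨[], by simp⟩

theorem of_mem (hm : m ∈ s) : IsSumOfAtMost 1 s m :=
  ⟨[m], by simpa⟩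

theorem mono (h : IsSumOfAtMost k s m) (hk : k ≤ k') : IsSumOfAtMost k' s m := by
  obtain ⟨l, hlen, hl⟩ := h
  exact ⟨l, hlen.trans hk, hl⟩

theorem add (h : IsSumOfAtMost k s m) (h' : IsSumOfAtMost k' s m') :
    IsSumOfAtMost (k + k') s (m + m') := by
  obtain ⟨l, hlen, hmem, rfl⟩ := h
  obtain ⟨l', hlen', hmem', rfl⟩ := h'
  exact ⟨l ++ l', by simpa using Nat.add_le_add hlen hlen',
    List.forall_mem_append.2 ⟨hmem, hmem'⟩, List.sum_append⟩

theorem map (h : IsSumOfAtMost k s m) (f : M →+ N) {s' : Set N} (hf : Set.MapsTo f s s') :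
    IsSumOfAtMost k s' (f m) := by
  obtain ⟨l, hlen, hmem, rfl⟩ := h
  exact ⟨l.map f, by simpa using hlen, List.forall_mem_map.2 fun x hx => hf (hmem x hx),
    (map_list_sum f l).symm⟩

end AddMonoid

theorem exists_sum_fin {M : Type*} [AddCommMonoid M] {s : Set M} {k : ℕ} {m : M}
    (h : IsSumOfAtMost k s m) :
    ∃ t ≤ k, ∃ f : Fin t → M, (∀ i, f i ∈ s) ∧ ∑ i, f i = m := by
  obtain ⟨l, hlen, hmem, rfl⟩ := h
  exact ⟨l.length, hlen, l.get, fun i => hmem _ (l.get_mem i), Fin.sum_univ_getElem l⟩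

end IsSumOfAtMost

section NestedLie

variable {ι L M : Type*} [LieRing L] [AddCommGroup M] [LieRingModule L M]

/-- The nested bracket `⁅Z i₁, ⁅Z i₂, ⋯ ⁅Z iₗ, a⁆ ⋯⁆⁆` along the word `S = [i₁, …, iₗ]`, the
analogue of `[(X,Y)_S, A]` for a family `Z` of any size acting on a Lie module. -/
def nestedLie (Z : ι → L) (S : List ι) (a : M) : M :=
  S.foldr (fun i m => ⁅Z i, m⁆) a

/-- The nested brackets of `a` along words of length `l` in which two adjacent distinct letters
`i, j` have been replaced by the single entry `⁅Z i, Z j⁆`: the error terms of reordering. -/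
def nestedLieContractions (Z : ι → L) (a : M) (l : ℕ) : Set M :=
  {m | ∃ (S T : List ι) (i j : ι), S.length + T.length + 2 = l ∧ i ≠ j ∧
    nestedLie Z S ⁅⁅Z i, Z j⁆, nestedLie Z T a⁆ = m}

variable (Z : ι → L) (a : M)

theorem nestedLie_cons (i : ι) (S : List ι) :
    nestedLie Z (i :: S) a = ⁅Z i, nestedLie Z S a⁆ :=
  rfl

theorem nestedLie_neg (S : List ι) : nestedLie Z S (-a) = -nestedLie Z S a := by
  induction S with
  | nil => rfl
  | cons i S ih => rw [nestedLie_cons, ih, lie_neg, nestedLie_cons]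

theorem nestedLie_cons_cons_sub (i j : ι) (S : List ι) :
    nestedLie Z (i :: j :: S) a - nestedLie Z (j :: i :: S) a =
      ⁅⁅Z i, Z j⁆, nestedLie Z S a⁆ :=
  (lie_lie (Z i) (Z j) (nestedLie Z S a)).symm

variable {a} in
theorem lie_mem_nestedLieContractions {l : ℕ} {m : M} (i : ι)
    (hm : m ∈ nestedLieContractions Z a l) : ⁅Z i, m⁆ ∈ nestedLieContractions Z a (l + 1) := by
  obtain ⟨S, T, j, k, hlen, hjk, rfl⟩ := hm
  exact ⟨i :: S, T, j, k, by rw [List.length_cons]; omega, hjk, rfl⟩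

variable {Z a} in
theorem IsSumOfAtMost.lie {k l : ℕ} {m : M}
    (h : IsSumOfAtMost k (nestedLieContractions Z a l) m) (i : ι) :
    IsSumOfAtMost k (nestedLieContractions Z a (l + 1)) ⁅Z i, m⁆ :=
  h.map (AddMonoidHom.mk' (⁅Z i, ·⁆) (lie_add (Z i)))
    fun _ => lie_mem_nestedLieContractions Z i

theorem isSumOfAtMost_nestedLie_sub_swap (i j : ι) (S : List ι) :
    IsSumOfAtMost 1 (nestedLieContractions Z a (S.length + 2))
      (nestedLie Z (i :: j :: S) a - nestedLie Z (j :: i :: S) a) := by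
  by_cases hij : i = j
  · rw [hij, sub_self]
    exact .zero _ _
  · exact .of_mem ⟨[], S, i, j, by simp, hij, (nestedLie_cons_cons_sub Z a i j S).symm⟩

theorem isSumOfAtMost_nestedLie_sub_middle (i : ι) (U V : List ι) :
    IsSumOfAtMost U.length (nestedLieContractions Z a ((U ++ V).length + 1))
      (nestedLie Z (i :: (U ++ V)) a - nestedLie Z (U ++ i :: V) a) := by
  induction U with
  | nil => simpa using .zero _ _
  | cons j U ih =>
    have telescope : nestedLie Z (i :: (j :: U ++ V)) a - nestedLie Z (j :: U ++ i :: V) a =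
        ⁅Z j, nestedLie Z (i :: (U ++ V)) a - nestedLie Z (U ++ i :: V) a⁆ +
          (nestedLie Z (i :: j :: (U ++ V)) a - nestedLie Z (j :: i :: (U ++ V)) a) := by
      simp only [List.cons_append, nestedLie_cons, lie_sub]
      abel
    rw [telescope]
    exact (ih.lie j).add (isSumOfAtMost_nestedLie_sub_swap Z a i j (U ++ V))

theorem isSumOfAtMost_nestedLie_sub_of_perm {S S' : List ι} (h : S.Perm S') :
    IsSumOfAtMost (S.length.choose 2) (nestedLieContractions Z a S.length)
      (nestedLie Z S a - nestedLie Z S' a) := by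
  induction S generalizing S' with
  | nil =>
    rw [h.nil_eq, sub_self]
    exact .zero _ _
  | cons i R ih =>
    obtain ⟨U, V, rfl⟩ := List.append_of_mem (h.subset List.mem_cons_self)
    have hR : R.Perm (U ++ V) := (h.trans List.perm_middle).cons_inv
    have telescope : nestedLie Z (i :: R) a - nestedLie Z (U ++ i :: V) a =
        (nestedLie Z (i :: (U ++ V)) a - nestedLie Z (U ++ i :: V) a) +
          ⁅Z i, nestedLie Z R a - nestedLie Z (U ++ V) a⁆ := by
      simp only [nestedLie_cons, lie_sub]
      abel
    rw [telescope, List.length_cons, Nat.choose_succ_succ', Nat.choose_one_right]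
    have hlen : R.length = (U ++ V).length := hR.length_eq
    have hU : U.length ≤ R.length := by simp [hlen]
    have middle := isSumOfAtMost_nestedLie_sub_middle Z a i U V
    rw [← hlen] at middle
    exact (middle.mono hU).add ((ih hR).lie i)

theorem exists_smul_of_mem_nestedLieContractions (R : Type*) [Ring R] [Module R M]
    {Z : Bool → L} {a m : M} {l : ℕ} (hm : m ∈ nestedLieContractions Z a l) :
    ∃ (c : R) (S T : List Bool), (c = 1 ∨ c = -1) ∧ S.length + T.length + 2 = l ∧
      m = c • nestedLie Z S ⁅⁅Z false, Z true⁆, nestedLie Z T a⁆ := by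
  obtain ⟨S, T, i, j, hlen, hij, rfl⟩ := hm
  cases i <;> cases j
  case false.false | true.true => exact absurd rfl hij
  case false.true => exact ⟨1, S, T, .inl rfl, hlen, (one_smul R _).symm⟩
  case true.false =>
    refine ⟨-1, S, T, .inr rfl, hlen, ?_⟩
    rw [neg_one_smul, ← nestedLie_neg, ← neg_lie, lie_skew]

theorem reorder_bivariate_nested_commutators_general (R : Type*) [Ring R] [Module R M]
    (Z : Bool → L) (a : M) {S S' : List Bool} (h : S.Perm S') :
    ∃ t ≤ S.length.choose 2, ∃ (c : Fin t → R) (Sl Tl : Fin t → List Bool),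
      (∀ i, (c i = 1 ∨ c i = -1) ∧ (Sl i).length + (Tl i).length + 2 = S.length) ∧
      nestedLie Z S a - nestedLie Z S' a =
        ∑ i, c i • nestedLie Z (Sl i) ⁅⁅Z false, Z true⁆, nestedLie Z (Tl i) a⁆ := by
  obtain ⟨t, ht, f, hf, hsum⟩ := (isSumOfAtMost_nestedLie_sub_of_perm Z a h).exists_sum_fin
  choose c Sl Tl hc hlen hterm using fun i => exists_smul_of_mem_nestedLieContractions R (hf i)
  exact ⟨t, ht, c, Sl, Tl, fun i => ⟨hc i, hlen i⟩,
    hsum.symm.trans (Finset.sum_congr rfl fun i _ => hterm i)⟩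

end NestedLie

attribute [local instance] LieRing.ofAssociativeRing

theorem matComm_eq_lie {n : ℕ} (M N : Matrix (Fin n) (Fin n) ℂ) : matComm M N = ⁅M, N⁆ :=
  rfl

theorem commSeq_eq_nestedLie {n : ℕ} (X Y : Matrix (Fin n) (Fin n) ℂ) (S : List Bool)
    (A : Matrix (Fin n) (Fin n) ℂ) :
    commSeq X Y S A = nestedLie (fun b => if b then Y else X) S A := by
  induction S with
  | nil => rfl
  | cons b S ih => rw [commSeq, ih, matComm_eq_lie, nestedLie_cons]

/-- **Reordering bivariate nested commutators** (Lemma 3.5). For sequences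
`S, S' ∈ {0,1}^ℓ` with the same number of `0`'s and `1`'s, the difference
`[(X,Y)_S, A] - [(X,Y)_{S'}, A]` can be written as `∑_{i=1}^t cᵢ [(X,Y)_{Sᵢ}, [[X,Y],
[(X,Y)_{Tᵢ}, A]]]` with `t ≤ ℓ²`, `cᵢ ∈ {-1, 1}`, and `len(Sᵢ) + len(Tᵢ) = ℓ - 2`. -/
theorem reorder_bivariate_nested_commutators (n ℓ : ℕ)
    (X Y A : Matrix (Fin n) (Fin n) ℂ)
    (S S' : List Bool) (hS : S.length = ℓ) (hS' : S'.length = ℓ)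
    (hcount0 : S.count false = S'.count false)
    (hcount1 : S.count true = S'.count true) :
    ∃ t : ℕ, t ≤ ℓ ^ 2 ∧
      ∃ (c : Fin t → ℂ) (Sl Tl : Fin t → List Bool),
        (∀ i, (c i = 1 ∨ c i = -1) ∧ (Sl i).length + (Tl i).length = ℓ - 2) ∧
        commSeq X Y S A - commSeq X Y S' A =
          ∑ i, c i • commSeq X Y (Sl i) (matComm (matComm X Y) (commSeq X Y (Tl i) A)) := by
  subst hS
  have hperm : S.Perm S' := List.perm_iff_count.2 (Bool.rec hcount0 hcount1)
  obtain ⟨t, ht, c, Sl, Tl, hcST, hsum⟩ :=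
    reorder_bivariate_nested_commutators_general ℂ (fun b => if b then Y else X) A hperm
  refine ⟨t, ht.trans (Nat.choose_le_pow _ _), c, Sl, Tl,
    fun i => ⟨(hcST i).1, Nat.eq_sub_of_add_eq (hcST i).2⟩, ?_⟩
  simpa [commSeq_eq_nestedLie, matComm_eq_lie] using hsum
end

section
/- Let p(x,y) = x^{i_1} y^{i_2}, q(x,y) = x^{j_1} y^{j_2}, and r(x,y) = p(x,y)·q(x,y), and let d = i_1 + i_2 + j_1 + j_2 be the degree of r. Let X, Y be n×n Hermitian complex matrices and ρ, A, B arbitrary n×n complex matrices. Then there exist ℓ ≤ d^2 complex numbers Z_1, …, Z_ℓ such that tr(p(X,Y|A)·q(X,Y|B)†·ρ) − tr(A·r(X,Y|B)†·ρ) = ∑_{i=1}^{ℓ} Z_i, where every Z_i has one of the following three forms: (1) ±tr([(X,Y)_S, A]·[(X,Y)_T, B]†·[X,ρ]) for some sequences S, T ∈ {0,1}^* with len(S) + len(T) = d − 1; (2) ±tr([(X,Y)_S, A]·[(X,Y)_T, B]†·[Y,ρ]) with len(S) + len(T) = d − 1; (3) ±tr(A·[(X,Y)_S, [[X,Y], [(X,Y)_T,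 B]]]†·ρ) with len(S) + len(T) = d − 2. -/
open scoped BigOperators Matrix

/-- The nested commutator `[A, B]_k`, with `[A, B]_0 = B` and
`[A, B]_{k+1} = [A, [A, B]_k]`. -/
noncomputable def nestedComm {n : ℕ} (A B : Matrix (Fin n) (Fin n) ℂ) : ℕ → Matrix (Fin n) (Fin n) ℂ
  | 0 => B
  | k + 1 => A * nestedComm A B k - nestedComm A B k * A

/-!
Write `[S, a]` for the iterated commutator along a word `S`. If `τ` is tracial and `x` is
self-adjoint, then `τ([x, a] c† ρ) - τ(a [x, c]† ρ) = -τ(a c† [x, ρ])`. So the letters of a word can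
be moved one at a time from the left factor to the right one, each move costing one error term
containing `[x, ρ]`. Moving all `i₁ + i₂` letters turns the right word into
`y^{i₂} x^{i₁} x^{j₁} y^{j₂}`; note the reversal. Sorting it takes `i₂ (i₁ + j₁)` transpositions of
adjacent letters, each costing one error term containing `[[x, y], ·]`.
-/

section Sumset

-- `k • E` below is the `k`-fold sumset `E + ⋯ + E`. The scope `Pointwise` would also allow the
-- dilation `{k • z | z ∈ E}` to be meant.
attribute [local instance] Set.addMonoid

lemma sub_mem_add_of_sub_mem {M : Type*} [AddGroup M] {E F : Set M} {x y z : M}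
    (hxy : x - y ∈ E) (hyz : y - z ∈ F) : x - z ∈ E + F :=
  sub_add_sub_cancel x y z ▸ Set.add_mem_add hxy hyz

lemma exists_fin_sum_of_mem_nsmul_add_nsmul {M : Type*} [AddCommMonoid M] {E F : Set M}
    {k m : ℕ} {z : M} (hz : z ∈ k • E + m • F) :
    ∃ Z : Fin (k + m) → M, z = ∑ i, Z i ∧ ∀ i, Z i ∈ E ∪ F := by
  have hz' : z ∈ (k + m) • (E ∪ F) := by
    rw [add_nsmul]
    exact Set.add_subset_add (Set.nsmul_subset_nsmul_left Set.subset_union_left)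
      (Set.nsmul_subset_nsmul_left Set.subset_union_right) hz
  obtain ⟨Z, hZ, rfl⟩ := Set.mem_nsmul_iff_sum.1 hz'
  exact ⟨Z, rfl, hZ⟩

end Sumset

section AdWord

variable {ι L : Type*} [LieRing L]

/-- The iterated adjoint action `a ↦ ⁅v i₁, ⁅v i₂, ⋯ ⁅v iₗ, a⁆⋯⁆⁆` along the word `[i₁, …, iₗ]`,
for a family `v` of letters. It is taken as a product of endomorphisms, so that concatenation of
words becomes multiplication. -/
def adWord (v : ι → L) (S : List ι) : Module.End ℤ L :=
  (S.map fun i => LieAlgebra.ad ℤ L (v i)).prod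

lemma adWord_nil (v : ι → L) : adWord v [] = 1 := rfl

lemma adWord_cons (v : ι → L) (i : ι) (S : List ι) :
    adWord v (i :: S) = LieAlgebra.ad ℤ L (v i) * adWord v S :=
  List.prod_cons

lemma adWord_append (v : ι → L) (S T : List ι) :
    adWord v (S ++ T) = adWord v S * adWord v T := by
  simp [adWord]

lemma adWord_replicate (v : ι → L) (k : ℕ) (i : ι) :
    adWord v (List.replicate k i) = LieAlgebra.ad ℤ L (v i) ^ k := by
  simp [adWord]

lemma adWord_swap_sub (v : ι → L) (S T : List ι) (i j : ι) (b : L) :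
    adWord v (S ++ j :: i :: T) b - adWord v (S ++ i :: j :: T) b
      = -adWord v S ⁅⁅v i, v j⁆, adWord v T b⁆ := by
  simp [adWord_append, adWord_cons, lie_lie, ← map_sub, ← map_neg]

end AdWord

section Tracial

attribute [local instance] LieRing.ofAssociativeRing Set.addMonoid

variable {ι R M : Type*} [Ring R] [StarRing R] [AddCommGroup M] (τ : R →+ M)

lemma map_lie_mul_star_mul_sub (hτ : ∀ a b, τ (a * b) = τ (b * a)) {x : R}
    (hx : IsSelfAdjoint x) (a c ρ : R) :
    τ (⁅x, a⁆ * star c * ρ) - τ (a * star ⁅x, c⁆ * ρ) = -τ (a * star c * ⁅x, ρ⁆) := by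
  have cyclic : τ (x * (a * (star c * ρ))) = τ (a * (star c * (ρ * x))) := by
    rw [hτ]
    simp only [mul_assoc]
  simp only [Ring.lie_def, star_sub, star_mul, hx.star_eq, sub_mul, mul_sub, map_sub, mul_assoc,
    cyclic]
  abel

/-- The error terms `-τ([S, a] [T, b]† [v i, ρ])` of degree `|S| + |T| + 1 = d` that arise from
moving a letter across the star. They cover forms (1) and (2) of the theorem. -/
def transferErrors (v : ι → R) (a b ρ : R) (d : ℕ) : Set M :=
  {z | ∃ (i : ι) (S T : List ι), S.length + T.length + 1 = d ∧
    z = -τ (adWord v S a * star (adWord v T b) * ⁅v i, ρ⁆)}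

/-- The error terms `-τ(a [S, [[v i, v j], [T, b]]]† ρ)` of degree `|S| + |T| + 2 = d` that arise
from exchanging adjacent letters `j`, `i` of a word. They are form (3) of the theorem. -/
def swapErrors (v : ι → R) (i j : ι) (a b ρ : R) (d : ℕ) : Set M :=
  {z | ∃ S T : List ι, S.length + T.length + 2 = d ∧
    z = -τ (a * star (adWord v S ⁅⁅v i, v j⁆, adWord v T b⁆) * ρ)}

lemma transfer_letter_mem (hτ : ∀ a b, τ (a * b) = τ (b * a)) {v : ι → R}
    (hv : ∀ i, IsSelfAdjoint (v i)) (a b ρ : R) {d : ℕ} (i : ι) {S T : List ι}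
    (hd : S.length + T.length + 1 = d) :
    τ (adWord v (i :: S) a * star (adWord v T b) * ρ)
        - τ (adWord v S a * star (adWord v (i :: T) b) * ρ)
      ∈ transferErrors τ v a b ρ d := by
  refine ⟨i, S, T, hd, ?_⟩
  simpa only [adWord_cons, Module.End.mul_apply, LieAlgebra.ad_apply] using
    map_lie_mul_star_mul_sub τ hτ (hv i) _ _ ρ

lemma transfer_word_mem (hτ : ∀ a b, τ (a * b) = τ (b * a)) {v : ι → R}
    (hv : ∀ i, IsSelfAdjoint (v i)) (a b ρ : R) {d : ℕ} {S T : List ι}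
    (hd : S.length + T.length = d) :
    τ (adWord v S a * star (adWord v T b) * ρ)
        - τ (a * star (adWord v (S.reverse ++ T) b) * ρ)
      ∈ S.length • transferErrors τ v a b ρ d := by
  induction S generalizing T with
  | nil => simp [adWord_nil]
  | cons i S ih =>
    rw [List.length_cons] at hd
    have head := transfer_letter_mem τ hτ hv a b ρ i (S := S) (T := T) (d := d) (by omega)
    have tail := ih (T := i :: T) (by rw [List.length_cons]; omega)
    rw [List.length_cons, succ_nsmul', List.reverse_cons, List.append_assoc, List.singleton_append]
    exact sub_mem_add_of_sub_mem head tail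

lemma swap_letters_mem (v : ι → R) (i j : ι) (a b ρ : R) {d : ℕ} {S T : List ι}
    (hd : S.length + T.length + 2 = d) :
    τ (a * star (adWord v (S ++ j :: i :: T) b) * ρ)
        - τ (a * star (adWord v (S ++ i :: j :: T) b) * ρ)
      ∈ swapErrors τ v i j a b ρ d := by
  refine ⟨S, T, hd, ?_⟩
  rw [← map_sub, ← sub_mul, ← mul_sub, ← star_sub, adWord_swap_sub, star_neg, mul_neg, neg_mul,
    map_neg]

lemma swap_letter_replicate_mem (v : ι → R) (i j : ι) (a b ρ : R) {d : ℕ} (m : ℕ) {S T : List ι}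
    (hd : S.length + T.length + m + 1 = d) :
    τ (a * star (adWord v (S ++ j :: (List.replicate m i ++ T)) b) * ρ)
        - τ (a * star (adWord v (S ++ (List.replicate m i ++ j :: T)) b) * ρ)
      ∈ m • swapErrors τ v i j a b ρ d := by
  induction m generalizing S with
  | zero => simp
  | succ m ih =>
    have first := swap_letters_mem τ v i j a b ρ (S := S) (T := List.replicate m i ++ T) (d := d)
      (by rw [List.length_append, List.length_replicate]; omega)
    have rest := ih (S := S ++ [i]) (by rw [List.length_append, List.length_singleton]; omega)
    rw [List.append_assoc, List.append_assoc, List.singleton_append, List.singleton_append] at rest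
    rw [succ_nsmul', List.replicate_succ, List.cons_append, List.cons_append]
    exact sub_mem_add_of_sub_mem first rest

lemma swap_replicate_replicate_mem (v : ι → R) (i j : ι) (a b ρ : R) {d : ℕ} (k m : ℕ)
    {T : List ι} (hd : k + m + T.length = d) :
    τ (a * star (adWord v (List.replicate k j ++ (List.replicate m i ++ T)) b) * ρ)
        - τ (a * star (adWord v (List.replicate m i ++ (List.replicate k j ++ T)) b) * ρ)
      ∈ (k * m) • swapErrors τ v i j a b ρ d := by
  induction k generalizing T with
  | zero => simp
  | succ k ih =>
    have last := swap_letter_replicate_mem τ v i j a b ρ m (S := List.replicate k j) (T := T)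
      (d := d) (by rw [List.length_replicate]; omega)
    have rest := ih (T := j :: T) (by rw [List.length_cons]; omega)
    rw [Nat.succ_mul, add_comm, add_nsmul]
    simp only [List.replicate_succ', List.append_assoc, List.singleton_append]
    exact sub_mem_add_of_sub_mem last rest

theorem commutator_monomial_equivalence_general (hτ : ∀ a b, τ (a * b) = τ (b * a)) {v : ι → R}
    (hv : ∀ i, IsSelfAdjoint (v i)) (i j : ι) (a b ρ : R) (i₁ i₂ j₁ j₂ : ℕ) :
    let x := LieAlgebra.ad ℤ R (v i)
    let y := LieAlgebra.ad ℤ R (v j)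
    τ ((x ^ i₁ * y ^ i₂) a * star ((x ^ j₁ * y ^ j₂) b) * ρ)
        - τ (a * star ((x ^ (i₁ + j₁) * y ^ (i₂ + j₂)) b) * ρ)
      ∈ (i₁ + i₂) • transferErrors τ v a b ρ (i₁ + i₂ + j₁ + j₂)
        + (i₂ * (i₁ + j₁)) • swapErrors τ v i j a b ρ (i₁ + i₂ + j₁ + j₂) := by
  have transfer := transfer_word_mem τ hτ hv a b ρ (d := i₁ + i₂ + j₁ + j₂)
    (S := List.replicate i₁ i ++ List.replicate i₂ j)
    (T := List.replicate j₁ i ++ List.replicate j₂ j)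
    (by simp only [List.length_append, List.length_replicate]; omega)
  have sort := swap_replicate_replicate_mem τ v i j a b ρ (d := i₁ + i₂ + j₁ + j₂)
    i₂ (i₁ + j₁) (T := List.replicate j₂ j) (by rw [List.length_replicate]; omega)
  simp only [List.reverse_append, List.reverse_replicate, List.length_append,
    List.length_replicate, adWord_append, adWord_replicate] at transfer sort
  simp only [pow_add, mul_assoc] at transfer sort ⊢
  exact sub_mem_add_of_sub_mem transfer sort

end Tracial

section Matrix

attribute [local instance] LieRing.ofAssociativeRing

variable {n : ℕ}

lemma nestedComm_eq_ad_pow (X A : Matrix (Fin n) (Fin n) ℂ) (k : ℕ) :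
    nestedComm X A k = (LieAlgebra.ad ℤ (Matrix (Fin n) (Fin n) ℂ) X ^ k) A := by
  induction k with
  | zero => rfl
  | succ k ih =>
    rw [pow_succ', Module.End.mul_apply, ← ih, LieAlgebra.ad_apply]
    rfl

lemma commSeq_eq_adWord (X Y A : Matrix (Fin n) (Fin n) ℂ) (S : List Bool) :
    commSeq X Y S A = adWord (fun i : Bool => if i then Y else X) S A := by
  induction S with
  | nil => rfl
  | cons i S ih =>
    rw [adWord_cons, Module.End.mul_apply, ← ih, LieAlgebra.ad_apply]
    rfl

lemma exists_commSeq_of_mem_errors {X Y A B ρ : Matrix (Fin n) (Fin n) ℂ} {d : ℕ} {z : ℂ}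
    (hz : z ∈ transferErrors (Matrix.traceAddMonoidHom (Fin n) ℂ)
          (fun i : Bool => if i then Y else X) A B ρ d ∪
        swapErrors (Matrix.traceAddMonoidHom (Fin n) ℂ)
          (fun i : Bool => if i then Y else X) false true A B ρ d) :
    ∃ (s : ℂ) (S T : List Bool), (s = 1 ∨ s = -1) ∧
      ((S.length + T.length = d - 1 ∧
          z = s * Matrix.trace (commSeq X Y S A * (commSeq X Y T B)ᴴ * matComm X ρ)) ∨
        (S.length + T.length = d - 1 ∧
          z = s * Matrix.trace (commSeq X Y S A * (commSeq X Y T B)ᴴ * matComm Y ρ)) ∨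
        (S.length + T.length = d - 2 ∧
          z = s * Matrix.trace
            (A * (commSeq X Y S (matComm (matComm X Y) (commSeq X Y T B)))ᴴ * ρ))) := by
  simp only [commSeq_eq_adWord]
  rcases hz with ⟨_ | _, S, T, rfl, rfl⟩ | ⟨S, T, rfl, rfl⟩
  · exact ⟨-1, S, T, .inr rfl, .inl ⟨rfl, (neg_one_mul _).symm⟩⟩
  · exact ⟨-1, S, T, .inr rfl, .inr (.inl ⟨rfl, (neg_one_mul _).symm⟩)⟩
  · exact ⟨-1, S, T, .inr rfl, .inr (.inr ⟨rfl, (neg_one_mul _).symm⟩)⟩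

end Matrix

lemma errors_count_le_degree_sq (i₁ i₂ j₁ j₂ : ℕ) :
    i₁ + i₂ + i₂ * (i₁ + j₁) ≤ (i₁ + i₂ + j₁ + j₂) ^ 2 := by
  have h₁ : i₁ ≤ i₁ ^ 2 := Nat.le_self_pow two_ne_zero _
  have h₂ : i₂ ≤ i₂ ^ 2 := Nat.le_self_pow two_ne_zero _
  calc i₁ + i₂ + i₂ * (i₁ + j₁)
      ≤ i₁ ^ 2 + i₂ ^ 2 + i₂ * (i₁ + j₁) := by gcongr
    _ ≤ (i₁ + i₂ + j₁) ^ 2 := by nlinarith [Nat.zero_le (i₁ * j₁)]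
    _ ≤ (i₁ + i₂ + j₁ + j₂) ^ 2 := by exact Nat.pow_le_pow_left (Nat.le_add_right _ _) 2

/-- **Commutator monomial equivalences** (Lemma 3.8). For monomials
`p(x,y) = x^{i₁} y^{i₂}`, `q(x,y) = x^{j₁} y^{j₂}` and `r = pq` of degree
`d = i₁+i₂+j₁+j₂`, with `X, Y` Hermitian, the expression
`tr(p(X,Y|A) q(X,Y|B)† ρ) - tr(A r(X,Y|B)† ρ)` equals a sum of at most `d²` error terms
`Zᵢ`, each of one of the three stated forms. -/
theorem commutator_monomial_equivalence (n i₁ i₂ j₁ j₂ : ℕ)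
    (X Y A B ρ : Matrix (Fin n) (Fin n) ℂ)
    (hX : X.IsHermitian) (hY : Y.IsHermitian) :
    ∃ ℓ : ℕ, ℓ ≤ (i₁ + i₂ + j₁ + j₂) ^ 2 ∧
      ∃ Z : Fin ℓ → ℂ,
        (Matrix.trace (nestedComm X (nestedComm Y A i₂) i₁ *
            (nestedComm X (nestedComm Y B j₂) j₁)ᴴ * ρ)
          - Matrix.trace (A * (nestedComm X (nestedComm Y B (i₂ + j₂)) (i₁ + j₁))ᴴ * ρ)
          = ∑ i, Z i) ∧
        (∀ i : Fin ℓ, ∃ (s : ℂ) (Sl Tl : List Bool), (s = 1 ∨ s = -1) ∧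
          ((Sl.length + Tl.length = (i₁ + i₂ + j₁ + j₂) - 1 ∧
              Z i = s * Matrix.trace (commSeq X Y Sl A * (commSeq X Y Tl B)ᴴ * matComm X ρ)) ∨
           (Sl.length + Tl.length = (i₁ + i₂ + j₁ + j₂) - 1 ∧
              Z i = s * Matrix.trace (commSeq X Y Sl A * (commSeq X Y Tl B)ᴴ * matComm Y ρ)) ∨
           (Sl.length + Tl.length = (i₁ + i₂ + j₁ + j₂) - 2 ∧
              Z i = s * Matrix.trace
                (A * (commSeq X Y Sl (matComm (matComm X Y) (commSeq X Y Tl B)))ᴴ * ρ)))) := by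
  have hv : ∀ i : Bool, IsSelfAdjoint (if i then Y else X) := Bool.forall_bool.2 ⟨hX, hY⟩
  obtain ⟨Z, hsum, hZ⟩ := exists_fin_sum_of_mem_nsmul_add_nsmul
    (commutator_monomial_equivalence_general (Matrix.traceAddMonoidHom (Fin n) ℂ)
      Matrix.trace_mul_comm hv false true A B ρ i₁ i₂ j₁ j₂)
  refine ⟨_, errors_count_le_degree_sq i₁ i₂ j₁ j₂, Z, ?_,
    fun i => exists_commSeq_of_mem_errors (hZ i)⟩
  simp only [nestedComm_eq_ad_pow]
  exact hsum
end
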